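/- Under the decoy-state assumptions, Q(ν₁)·e^{ν₁} − Q(ν₂)·e^{ν₂} ≤ (ν₁ − ν₂)·Y(1) + ((ν₁² − ν₂²)/μ²)·(Q(μ)·e^{μ} − Y(0) − μ·Y(1)). -/

import Mathlib

/-- The gain for intensity `m` with yields `Y`: Poisson average of the yields. -/
noncomputable def decoyGain (Y : ℕ → ℝ) (m : ℝ) : ℝ :=
  ∑' i : ℕ, Real.exp (-m) * m ^ i / (Nat.factorial i) * Y i

theorem decoy_pow_aux (a b μ : ℝ) (hb : 0 ≤ b) (hab : b < a) (hμ : a + b < μ) (n : ℕ) :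
    a ^ (n + 2) - b ^ (n + 2) ≤ (a ^ 2 - b ^ 2) * μ ^ n := by
  induction n with
  | zero => simp
  | succ k ih =>
    have h1 : b ^ (k + 1) ≤ a ^ (k + 1) := pow_le_pow_left₀ hb hab.le _
    have h2 : b ^ (k + 2) ≤ a ^ (k + 2) := pow_le_pow_left₀ hb hab.le _
    have hμ0 : 0 ≤ μ := by linarith
    have h3 : 0 ≤ a * b * (a ^ (k + 1) - b ^ (k + 1)) :=
      mul_nonneg (mul_nonneg (by linarith) hb) (by linarith)
    calc a ^ (k + 1 + 2) - b ^ (k + 1 + 2)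
        = (a + b) * (a ^ (k + 2) - b ^ (k + 2)) - a * b * (a ^ (k + 1) - b ^ (k + 1)) := by ring
      _ ≤ (a + b) * (a ^ (k + 2) - b ^ (k + 2)) := by linarith
      _ ≤ μ * (a ^ (k + 2) - b ^ (k + 2)) :=
        mul_le_mul_of_nonneg_right hμ.le (by linarith)
      _ ≤ μ * ((a ^ 2 - b ^ 2) * μ ^ k) := mul_le_mul_of_nonneg_left ih hμ0
      _ = (a ^ 2 - b ^ 2) * μ ^ (k + 1) := by ring

theorem decoy_summable_aux (Y : ℕ → ℝ) (hY : ∀ i, 0 ≤ Y i ∧ Y i ≤ 1) (m : ℝ) (hm : 0 ≤ m) :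
    Summable (fun i : ℕ => m ^ i / (Nat.factorial i) * Y i) := by
  refine Summable.of_nonneg_of_le (fun i => ?_) (fun i => ?_) (Real.summable_pow_div_factorial m)
  · have := (hY i).1
    positivity
  · exact mul_le_of_le_one_right (by positivity) (hY i).2

theorem decoy_gain_aux (Y : ℕ → ℝ) (hY : ∀ i, 0 ≤ Y i ∧ Y i ≤ 1) (m : ℝ) (hm : 0 ≤ m) :
    decoyGain Y m * Real.exp m =
      Y 0 + m * Y 1 + ∑' i : ℕ, m ^ (i + 2) / (Nat.factorial (i + 2)) * Y (i + 2) := by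
  have hs := decoy_summable_aux Y hY m hm
  have h := hs.sum_add_tsum_nat_add 2
  simp only [Finset.sum_range_succ, Finset.sum_range_zero] at h
  have h2 : decoyGain Y m * Real.exp m = ∑' i : ℕ, m ^ i / (Nat.factorial i) * Y i := by
    unfold decoyGain
    rw [← tsum_mul_right]
    refine tsum_congr fun i => ?_
    have he : Real.exp (-m) * Real.exp m = 1 := by rw [← Real.exp_add]; simp
    calc _ = (Real.exp (-m) * Real.exp m) * (m ^ i / (Nat.factorial i) * Y i) := by ring
      _ = _ := by rw [he, one_mul]
  rw [h2, ← h]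
  simp

theorem decoy_gain_difference_upper_bound (Y : ℕ → ℝ) (hY : ∀ i, 0 ≤ Y i ∧ Y i ≤ 1)
    (μ ν₁ ν₂ : ℝ) (hν₂ : 0 ≤ ν₂) (hν : ν₂ < ν₁) (hμ : ν₁ + ν₂ < μ) :
    decoyGain Y ν₁ * Real.exp ν₁ - decoyGain Y ν₂ * Real.exp ν₂
      ≤ (ν₁ - ν₂) * Y 1
        + (ν₁ ^ 2 - ν₂ ^ 2) / μ ^ 2 *
          (decoyGain Y μ * Real.exp μ - Y 0 - μ * Y 1) := by
  have hμ0 : 0 < μ := by linarith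
  have hν₁ : 0 ≤ ν₁ := by linarith
  have S (m : ℝ) (hm : 0 ≤ m) :=
    (summable_nat_add_iff 2).2 (decoy_summable_aux Y hY m hm)
  rw [decoy_gain_aux Y hY ν₁ hν₁, decoy_gain_aux Y hY ν₂ hν₂, decoy_gain_aux Y hY μ hμ0.le]
  have key := ((S ν₁ hν₁).sub (S ν₂ hν₂)).tsum_le_tsum (fun i => ?_)
    ((S μ hμ0.le).mul_left ((ν₁ ^ 2 - ν₂ ^ 2) / μ ^ 2))
  · rw [(S ν₁ hν₁).tsum_sub (S ν₂ hν₂), tsum_mul_left] at key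
    rw [show ∀ t : ℝ, Y 0 + μ * Y 1 + t - Y 0 - μ * Y 1 = t from fun t => by ring]
    linarith
  · have h := decoy_pow_aux ν₁ ν₂ μ hν₂ hν hμ i
    have hc : 0 ≤ Y (i + 2) / (Nat.factorial (i + 2) : ℝ) :=
      div_nonneg (hY _).1 (by positivity)
    have h' := mul_le_mul_of_nonneg_right h hc
    calc _ = (ν₁ ^ (i + 2) - ν₂ ^ (i + 2)) * (Y (i + 2) / (Nat.factorial (i + 2) : ℝ)) := by ring
      _ ≤ _ := h'
      _ = _ := by field_simp; ring
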